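/- Let h : ℝ → ℝ be continuous, let g : ℝ → ℝ be convex, differentiable, and strictly monotone increasing, and set f = g ∘ h. Let v > 0 and t ∈ ℝ. Let ψ : ℝ → ℝ be twice continuously differentiable, strictly positive, square-integrable, with ψ → 0 and ψ' → 0 at ±∞, satisfying −ψ'' + v·f·ψ = E·ψ. Let φ : ℝ → ℝ be twice continuously differentiable, strictly positive, square-integrable, with φ → 0 and φ' → 0 at ±∞, satisfying −φ'' + v·g'(h(t))·h·φ = ε·φ. Assume ψφ, ψ·h·φ, and ψ·f·φ are integrable and ψφ' − ψ'φ → 0 at ±∞. Then E ≥ v·(g(h(t)) − g'(h(t))·h(t)) + ε. -/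

import Mathlib

open Filter MeasureTheory

/-!
Since the tangent line at the contact height lies below the convex function `g`, the tangential
potential lies below the original one, so it suffices to compare the ground-state energies of two
ordered potentials `U ≤ V`. The Wronskian `ψ φ' - ψ' φ` of the two ground states has derivative
`(U - V + E - ε) ψ φ`. If `E < ε`, this is everywhere negative, so the Wronskian strictly decreases,
although it takes the same limit at `-∞` and at `+∞`.
-/

theorem lt_of_strictAnti_of_tendsto {α β : Type*} [LinearOrder α] [Nontrivial α] [Preorder β]
    [TopologicalSpace β] [OrderClosedTopology β] {w : α → β} {a b : β} (hw : StrictAnti w)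
    (hbot : Tendsto w atBot (nhds a)) (htop : Tendsto w atTop (nhds b)) : b < a := by
  obtain ⟨x, y, hxy⟩ := exists_pair_lt α
  calc
    b ≤ w y := hw.antitone.le_of_tendsto htop y
    _ < w x := hw hxy
    _ ≤ a := hw.antitone.ge_of_tendsto hbot x

theorem tangent_line_le_of_convexOn {S : Set ℝ} {g : ℝ → ℝ} {g' s y : ℝ} (hg : ConvexOn ℝ S g)
    (hs : s ∈ S) (hy : y ∈ S) (hgs : HasDerivAt g g' s) : g s + g' * (y - s) ≤ g y := by
  rcases lt_trichotomy y s with hys | rfl | hsy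
  · have hslope : slope g y s ≤ g' := hg.slope_le_of_hasDerivAt hy hs hys hgs
    rw [slope_def_field, div_le_iff₀ (sub_pos.2 hys)] at hslope
    linarith
  · simp
  · have hslope : g' ≤ slope g s y := hg.le_slope_of_hasDerivAt hs hy hsy hgs
    rw [slope_def_field, le_div_iff₀ (sub_pos.2 hsy)] at hslope
    linarith

/-- The Wronskian `u w' - u' w` of two functions of one variable. -/
noncomputable def wronskian {𝕜 A : Type*} [NontriviallyNormedField 𝕜] [NormedRing A]
    [NormedAlgebra 𝕜 A] (u w : 𝕜 → A) (x : 𝕜) : A :=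
  u x * deriv w x - deriv u x * w x

theorem hasDerivAt_wronskian {𝕜 A : Type*} [NontriviallyNormedField 𝕜] [NormedRing A]
    [NormedAlgebra 𝕜 A] {u w : 𝕜 → A} {x : 𝕜} (hu : DifferentiableAt 𝕜 u x)
    (hu' : DifferentiableAt 𝕜 (deriv u) x) (hw : DifferentiableAt 𝕜 w x)
    (hw' : DifferentiableAt 𝕜 (deriv w) x) :
    HasDerivAt (wronskian u w) (u x * deriv (deriv w) x - deriv (deriv u) x * w x) x :=
  ((hu.hasDerivAt.mul hw'.hasDerivAt).sub (hu'.hasDerivAt.mul hw.hasDerivAt)).congr_deriv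
    (by abel)

/-- Classical solutions of the one-dimensional stationary Schrödinger equation
`-ψ'' + V ψ = E ψ`. The differentiability fields make `deriv (deriv ψ)` a genuine second
derivative; neither normalizability nor `ψ ≠ 0` is part of the notion. -/
structure IsSchrodingerSolution {𝕜 : Type*} [NontriviallyNormedField 𝕜] (V : 𝕜 → 𝕜) (E : 𝕜)
    (ψ : 𝕜 → 𝕜) : Prop where
  differentiable : Differentiable 𝕜 ψ
  differentiable_deriv : Differentiable 𝕜 (deriv ψ)
  equation : ∀ x, -(deriv (deriv ψ) x) + V x * ψ x = E * ψ x

namespace IsSchrodingerSolution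

section Field

variable {𝕜 : Type*} [NontriviallyNormedField 𝕜] {U V ψ φ : 𝕜 → 𝕜} {E ε : 𝕜}

theorem of_contDiff_two (hψ : ContDiff 𝕜 2 ψ)
    (heq : ∀ x, -(deriv (deriv ψ) x) + V x * ψ x = E * ψ x) : IsSchrodingerSolution V E ψ :=
  ⟨hψ.differentiable two_ne_zero, hψ.differentiable_deriv_two, heq⟩

theorem const_add (c : 𝕜) (hψ : IsSchrodingerSolution V E ψ) :
    IsSchrodingerSolution (fun x => c + V x) (c + E) ψ where
  differentiable := hψ.differentiable
  differentiable_deriv := hψ.differentiable_deriv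
  equation x := by linear_combination hψ.equation x

protected theorem hasDerivAt_wronskian (hψ : IsSchrodingerSolution V E ψ)
    (hφ : IsSchrodingerSolution U ε φ) (x : 𝕜) :
    HasDerivAt (wronskian ψ φ) ((U x - V x + (E - ε)) * (ψ x * φ x)) x := by
  refine (hasDerivAt_wronskian (hψ.differentiable x) (hψ.differentiable_deriv x)
    (hφ.differentiable x) (hφ.differentiable_deriv x)).congr_deriv ?_
  linear_combination φ x * hψ.equation x - ψ x * hφ.equation x

end Field

theorem energy_le_of_potential_le {U V ψ φ : ℝ → ℝ} {E ε a b : ℝ}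
    (hψ : IsSchrodingerSolution V E ψ) (hφ : IsSchrodingerSolution U ε φ) (hUV : ∀ x, U x ≤ V x)
    (hψpos : ∀ x, 0 < ψ x) (hφpos : ∀ x, 0 < φ x)
    (hbot : Tendsto (wronskian ψ φ) atBot (nhds a))
    (htop : Tendsto (wronskian ψ φ) atTop (nhds b)) (hab : a ≤ b) : ε ≤ E := by
  by_contra! hEε
  have hanti : StrictAnti (wronskian ψ φ) :=
    strictAnti_of_hasDerivAt_neg (hψ.hasDerivAt_wronskian hφ) fun x =>
      mul_neg_of_neg_of_pos (by linarith [hUV x]) (mul_pos (hψpos x) (hφpos x))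
  exact (lt_of_strictAnti_of_tendsto hanti hbot htop).not_ge hab

end IsSchrodingerSolution

theorem envelope_ground_state_lower_bound_general {S : Set ℝ} {h g ψ φ : ℝ → ℝ}
    {v s E ε a b : ℝ} (hg : ConvexOn ℝ S g) (hh : ∀ x, h x ∈ S) (hs : s ∈ S)
    (hgs : DifferentiableAt ℝ g s) (hv : 0 ≤ v)
    (hψ : IsSchrodingerSolution (fun x => v * g (h x)) E ψ) (hψpos : ∀ x, 0 < ψ x)
    (hφ : IsSchrodingerSolution (fun x => v * deriv g s * h x) ε φ) (hφpos : ∀ x, 0 < φ x)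
    (hbot : Tendsto (wronskian ψ φ) atBot (nhds a))
    (htop : Tendsto (wronskian ψ φ) atTop (nhds b)) (hab : a ≤ b) :
    v * (g s - deriv g s * s) + ε ≤ E := by
  refine hψ.energy_le_of_potential_le (hφ.const_add (v * (g s - deriv g s * s)))
    (fun x => ?_) hψpos hφpos hbot htop hab
  calc
    v * (g s - deriv g s * s) + v * deriv g s * h x
        = v * (g s + deriv g s * (h x - s)) := by ring
    _ ≤ v * g (h x) :=
      mul_le_mul_of_nonneg_left (tangent_line_le_of_convexOn hg hs (hh x) hgs.hasDerivAt) hv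

/-- Envelope-theory lower bound for the ground state: with `f = g ∘ h`, `g`
convex and increasing, a positive eigenfunction `ψ` of `-d²/dx² + v·f` with
eigenvalue `E`, and a positive eigenfunction `φ` of the tangential base operator
`-d²/dx² + v·g'(h(t))·h` with eigenvalue `ε`, one has
`E ≥ v·(g(h(t)) − g'(h(t))·h(t)) + ε`. -/
theorem envelope_ground_state_lower_bound
    (h g : ℝ → ℝ) (hh : Continuous h)
    (hgconv : ConvexOn ℝ Set.univ g) (hgdiff : Differentiable ℝ g)
    (hgmono : StrictMono g)
    (f : ℝ → ℝ) (hf : f = g ∘ h)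
    (v t E ε : ℝ) (hv : 0 < v)
    (ψ : ℝ → ℝ) (hψC2 : ContDiff ℝ 2 ψ) (hψpos : ∀ x, 0 < ψ x)
    (hψL2 : Integrable (fun x => (ψ x) ^ 2))
    (hψtop : Tendsto ψ atTop (nhds 0)) (hψbot : Tendsto ψ atBot (nhds 0))
    (hψ'top : Tendsto (deriv ψ) atTop (nhds 0))
    (hψ'bot : Tendsto (deriv ψ) atBot (nhds 0))
    (hψeq : ∀ x, -(deriv (deriv ψ) x) + v * f x * ψ x = E * ψ x)
    (φ : ℝ → ℝ) (hφC2 : ContDiff ℝ 2 φ) (hφpos : ∀ x, 0 < φ x)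
    (hφL2 : Integrable (fun x => (φ x) ^ 2))
    (hφtop : Tendsto φ atTop (nhds 0)) (hφbot : Tendsto φ atBot (nhds 0))
    (hφ'top : Tendsto (deriv φ) atTop (nhds 0))
    (hφ'bot : Tendsto (deriv φ) atBot (nhds 0))
    (hφeq : ∀ x, -(deriv (deriv φ) x) + v * deriv g (h t) * h x * φ x = ε * φ x)
    (hint1 : Integrable (fun x => ψ x * φ x))
    (hint2 : Integrable (fun x => ψ x * h x * φ x))
    (hint3 : Integrable (fun x => ψ x * f x * φ x))
    (hWtop : Tendsto (fun x => ψ x * deriv φ x - deriv ψ x * φ x) atTop (nhds 0))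
    (hWbot : Tendsto (fun x => ψ x * deriv φ x - deriv ψ x * φ x) atBot (nhds 0)) :
    v * (g (h t) - deriv g (h t) * h t) + ε ≤ E := by
  subst hf
  exact envelope_ground_state_lower_bound_general hgconv (fun _ => Set.mem_univ _)
    (Set.mem_univ _) (hgdiff _) hv.le
    (.of_contDiff_two hψC2 hψeq) hψpos (.of_contDiff_two hφC2 hφeq) hφpos
    hWbot hWtop le_rfl
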